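/- Let Γ be a geometric distance-regular graph with diameter D ≥ 3, and suppose Γ contains a 3-claw but no 4-claws. Then either k = 3(a_1+1) and c_2 = 1, or D = 3 and c_2 ≥ 2. -/

import Mathlib

/-!
Let `θ` be the smallest eigenvalue and call the chosen Delsarte cliques lines. Counting neighbours
shows that each vertex is on `-θ` lines, so the point-line incidence matrix `N` satisfies
`N Nᵀ = A - θ I`, and every `θ`-eigenfunction sums to zero over every line (`sum_line_eq_zero`).
Distance-regularity supplies `θ`-eigenfunctions of the form `y ↦ φ (dist x y)`, one for each vertex
`x`, with `φ` independent of `x` and `φ 1 ≠ 0` (`IsDRG.exists_cosine`). Summing them over a line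
shows that lines are maximal cliques, and that a vertex off a line with a neighbour on it has there
a number `ψ` of neighbours which does not depend on the choice of the vertex and the line
(`IsGeometric.exists_lineSystem`).

If `c₂ ≥ 2`, comparing neighbours on a line shows that the common neighbours of two vertices at
distance two never form a clique (`LineSystem.exists_quadrangle`). If moreover `D ≥ 4`, let `v` be
the midpoint of a geodesic of length four from `x` to `y`. Two nonadjacent common neighbours of `x`
and `v` together with two nonadjacent common neighbours of `v` and `y` form a `4`-claw at `v`
(`LineSystem.hasClaw_four`). Hence `D = 3`.

If `c₂ = 1`, a common neighbour of two adjacent vertices lies on their line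
(`LineSystem.mem_line`), so every neighbourhood is a disjoint union of cliques of size `a₁ + 1`,
one for each line. The claw conditions say that there are three of them, so `k = 3 (a₁ + 1)`.
-/

open SimpleGraph Finset

/-- `G` is a distance-regular graph with diameter `D` and intersection numbers
`b i` (number of neighbours of `y` at distance `i+1` from `x` when `dist x y = i`) and
`c i` (number of neighbours of `y` at distance `i-1` from `x` when `dist x y = i`). -/
def IsDRG {V : Type*} [Fintype V] (G : SimpleGraph V) (D : ℕ) (b c : ℕ → ℕ) : Prop :=
  G.Connected ∧
  (∃ x y : V, G.dist x y = D) ∧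
  (∀ x y : V, G.dist x y ≤ D) ∧
  c 0 = 0 ∧ c 1 = 1 ∧ b D = 0 ∧
  (∀ i ≤ D, ∀ x y : V, G.dist x y = i →
    {z : V | G.Adj y z ∧ G.dist x z = i - 1}.ncard = c i ∧
    {z : V | G.Adj y z ∧ G.dist x z = i + 1}.ncard = b i)

/-- `G` contains a `t`-claw: a vertex together with `t` pairwise nonadjacent neighbours
(an induced `K_{1,t}`). -/
def HasClaw {V : Type*} (G : SimpleGraph V) (t : ℕ) : Prop :=
  ∃ (x : V) (s : Finset V), s.card = t ∧ (∀ y ∈ s, G.Adj x y) ∧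
    (s : Set V).Pairwise fun y z => ¬ G.Adj y z

/-- `θ` is an eigenvalue of the (real) adjacency matrix of `G`. -/
def IsAdjEigenvalue {V : Type*} [Fintype V] (G : SimpleGraph V) [DecidableRel G.Adj]
    (θ : ℝ) : Prop :=
  ∃ v : V → ℝ, v ≠ 0 ∧ (G.adjMatrix ℝ).mulVec v = θ • v

/-- `G` contains an induced quadrangle: vertices `x, z₁, y, z₂` with
`dist x y = dist z₁ z₂ = 2` inducing a 4-cycle. -/
def HasQuadrangle {V : Type*} (G : SimpleGraph V) : Prop :=
  ∃ x z₁ y z₂ : V, G.dist x y = 2 ∧ G.dist z₁ z₂ = 2 ∧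
    G.Adj x z₁ ∧ G.Adj z₁ y ∧ G.Adj y z₂ ∧ G.Adj z₂ x

/-- The diameter-3 intersection array `{β₀,β₁,β₂; γ₁,γ₂,γ₃}`. -/
def arr3 (b c : ℕ → ℕ) (β₀ β₁ β₂ γ₁ γ₂ γ₃ : ℕ) : Prop :=
  b 0 = β₀ ∧ b 1 = β₁ ∧ b 2 = β₂ ∧ c 1 = γ₁ ∧ c 2 = γ₂ ∧ c 3 = γ₃

/-- `G` (a distance-regular graph with valency `k`) is geometric: it is non-complete and
there is a collection of Delsarte cliques (cliques of size `1 + k/(-θ_D)`, where `θ_D` is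
the smallest adjacency eigenvalue) such that every edge lies in exactly one of them. -/
def IsGeometric {V : Type*} [Fintype V] (G : SimpleGraph V) [DecidableRel G.Adj]
    (k : ℕ) : Prop :=
  (∃ x y : V, x ≠ y ∧ ¬ G.Adj x y) ∧
  ∃ (θ : ℝ) (𝒞 : Set (Finset V)),
    IsAdjEigenvalue G θ ∧ (∀ θ', IsAdjEigenvalue G θ' → θ ≤ θ') ∧
    (∀ C ∈ 𝒞, G.IsClique (C : Set V) ∧ (C.card : ℝ) = 1 + (k : ℝ) / (-θ)) ∧
    (∀ x y : V, G.Adj x y → ∃! C : Finset V, C ∈ 𝒞 ∧ x ∈ C ∧ y ∈ C)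


/-! ### Distances -/

lemma exists_dist_eq_of_le {V : Type*} {G : SimpleGraph V} (hconn : G.Connected)
    (x y : V) {i : ℕ} (hi : i ≤ G.dist x y) :
    ∃ z, G.dist x z = i ∧ G.dist z y = G.dist x y - i := by
  obtain ⟨p, hp⟩ := hconn.exists_walk_length_eq_dist x y
  refine ⟨p.getVert i, ?_⟩
  have h1 := dist_le (p.take i)
  have h2 := dist_le (p.drop i)
  have h3 := hconn.dist_triangle (u := x) (v := p.getVert i) (w := y)
  rw [Walk.take_length] at h1
  rw [Walk.drop_length] at h2
  omega

lemma dist_eq_two_of_common {V : Type*} {G : SimpleGraph V} (hconn : G.Connected)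
    {x y z : V} (hxy : x ≠ y) (hna : ¬ G.Adj x y)
    (hxz : G.Adj x z) (hzy : G.Adj z y) : G.dist x y = 2 := by
  have h1 := hconn.one_lt_dist_of_ne_of_not_adj hxy hna
  have h2 := hconn.dist_triangle (u := x) (v := z) (w := y)
  rw [dist_eq_one_iff_adj.2 hxz, dist_eq_one_iff_adj.2 hzy] at h2
  omega

lemma IsDRG.b_pos {V : Type*} [Fintype V] {G : SimpleGraph V} {D : ℕ} {b c : ℕ → ℕ}
    (h : IsDRG G D b c) {i : ℕ} (hi : i < D) : 0 < b i := by
  obtain ⟨hconn, ⟨x, y, hxy⟩, -, -, -, -, hbc⟩ := h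
  obtain ⟨z, hz, -⟩ := exists_dist_eq_of_le hconn x y (i := i + 1) (by omega)
  obtain ⟨w, hw, hwz⟩ := exists_dist_eq_of_le hconn x z (i := i) (by omega)
  rw [← (hbc i hi.le x w hw).2, Set.ncard_pos]
  refine ⟨z, dist_eq_one_iff_adj.1 ?_, hz⟩
  omega

section DistanceRegular

variable {V : Type*} [Fintype V] {G : SimpleGraph V} [DecidableRel G.Adj]
  {D : ℕ} {b c : ℕ → ℕ}

lemma IsDRG.card_neighborFinset (h : IsDRG G D b c) (x : V) :
    (G.neighborFinset x).card = b 0 := by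
  obtain ⟨hconn, -, -, -, -, -, hbc⟩ := h
  rw [← (hbc 0 (Nat.zero_le _) x x dist_self).2, ← Set.ncard_coe_finset]
  congr 1
  ext z
  simp +contextual [dist_eq_one_iff_adj]

/-- Summing a function of the distance from `x` over the neighbours of `y` gives the action of
the tridiagonal intersection matrix. -/
lemma IsDRG.sum_neighbor (h : IsDRG G D b c) (g : ℕ → ℝ) (x y : V) :
    ∑ z ∈ G.neighborFinset y, g (G.dist x z) =
      c (G.dist x y) * g (G.dist x y - 1) +
        ((b 0 : ℝ) - b (G.dist x y) - c (G.dist x y)) * g (G.dist x y) +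
        b (G.dist x y) * g (G.dist x y + 1) := by
  have hcard := h.card_neighborFinset y
  obtain ⟨hconn, -, hle, -, -, -, hbc⟩ := h
  obtain ⟨hc, hb⟩ := hbc _ (hle x y) x y rfl
  set i := G.dist x y with hi
  have hpt : ∀ z ∈ G.neighborFinset y, g (G.dist x z) =
      ((if G.dist x z = i - 1 then g (i - 1) - g i else 0) +
        (if G.dist x z = i + 1 then g (i + 1) - g i else 0)) + g i := by
    intro z hz
    rw [mem_neighborFinset] at hz
    have h1 := hconn.dist_triangle (u := x) (v := y) (w := z)
    have h2 := hconn.dist_triangle (u := x) (v := z) (w := y)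
    rw [dist_eq_one_iff_adj.2 hz] at h1
    rw [dist_eq_one_iff_adj.2 hz.symm] at h2
    have h3 : G.dist x z = i - 1 ∨ G.dist x z = i ∨ G.dist x z = i + 1 := by omega
    rcases h3 with h3 | h3 | h3
    · rw [h3, if_pos rfl, if_neg (by omega)]; ring
    · rw [h3, if_neg (show ¬ i = i + 1 by omega)]
      split_ifs with h4
      · rw [← h4]; ring
      · ring
    · rw [h3, if_neg (by omega), if_pos rfl]; ring
  have hS : ∀ j, ((G.neighborFinset y).filter fun z => G.dist x z = j).card =
      {z : V | G.Adj y z ∧ G.dist x z = j}.ncard := by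
    intro j
    rw [← Set.ncard_coe_finset]
    congr 1
    ext z
    simp
  rw [Finset.sum_congr rfl hpt, Finset.sum_add_distrib, Finset.sum_add_distrib,
    ← Finset.sum_filter, ← Finset.sum_filter]
  simp only [Finset.sum_const, nsmul_eq_mul, hS, hc, hb, hcard]
  ring

/-! ### Eigenfunctions depending on the distance only -/

/-- Adjacency is symmetric, so an eigenfunction `w` may be moved across the adjacency operator. -/
lemma sum_eigen_mul {θ : ℝ} {w : V → ℝ}
    (hw : ∀ y, ∑ z ∈ G.neighborFinset y, w z = θ * w y) (f : V → ℝ) :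
    ∑ z, w z * ∑ y ∈ G.neighborFinset z, f y = θ * ∑ z, w z * f z := by
  have : ∑ z, w z * ∑ y ∈ G.neighborFinset z, f y =
      ∑ y, (∑ z ∈ G.neighborFinset y, w z) * f y := by
    simp_rw [Finset.mul_sum, Finset.sum_mul]
    apply Finset.sum_comm'
    intro x y
    simp [G.adj_comm]
  rw [this, Finset.mul_sum]
  exact Finset.sum_congr rfl fun y _ => by rw [hw y]; ring

/-- For an eigenvalue `θ ≠ 0` of a distance-regular graph there is a function `φ` of the distance
(a multiple of the cosine sequence) such that `φ (dist x ·)` is a `θ`-eigenfunction for every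
vertex `x`. It is found as a right null vector of the intersection matrix minus `θ`, which is
singular because the sums of an eigenvector over the spheres around a vertex form a left null
vector. The value `φ 1` is nonzero, since otherwise the recurrence forces `φ = 0`. -/
lemma IsDRG.exists_cosine (h : IsDRG G D b c) (hD : 2 ≤ D) {θ : ℝ} (hθ : θ ≠ 0)
    (heig : IsAdjEigenvalue G θ) :
    ∃ φ : ℕ → ℝ, φ 1 ≠ 0 ∧ ∀ x y : V,
      ∑ z ∈ G.neighborFinset y, φ (G.dist x z) = θ * φ (G.dist x y) := by
  classical
  obtain ⟨w, hw0, hw⟩ := heig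
  have hw' : ∀ y, ∑ z ∈ G.neighborFinset y, w z = θ * w y := by
    intro y
    have := congrFun hw y
    rwa [adjMatrix_mulVec_apply] at this
  obtain ⟨x₀, hx₀⟩ := Function.ne_iff.1 hw0
  -- Extension by zero to all natural numbers; index `D + 1` is multiplied by `b D = 0` only.
  let ext0 : (Fin (D + 1) → ℝ) → ℕ → ℝ := fun g n => if hn : n < D + 1 then g ⟨n, hn⟩ else 0
  let T : (Fin (D + 1) → ℝ) →ₗ[ℝ] (Fin (D + 1) → ℝ) :=
    { toFun := fun g i => c i * ext0 g (i - 1) + ((b 0 : ℝ) - b i - c i) * ext0 g i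
        + b i * ext0 g (i + 1) - θ * ext0 g i
      map_add' := by
        intro g g'
        funext i
        have : ∀ n, ext0 (g + g') n = ext0 g n + ext0 g' n := by
          intro n; simp only [ext0]; split_ifs <;> simp
        simp only [this, Pi.add_apply]; ring
      map_smul' := by
        intro r g
        funext i
        have : ∀ n, ext0 (r • g) n = r * ext0 g n := by
          intro n; simp only [ext0]; split_ifs <;> simp
        simp only [this, Pi.smul_apply, RingHom.id_apply, smul_eq_mul]; ring }
  have hTdist : ∀ g (x y : V), ∑ z ∈ G.neighborFinset y, ext0 g (G.dist x z)
      - θ * ext0 g (G.dist x y) = ext0 (T g) (G.dist x y) := by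
    intro g x y
    have hlt : G.dist x y < D + 1 := Nat.lt_succ_of_le (h.2.2.1 x y)
    rw [h.sum_neighbor (ext0 g) x y]
    conv_rhs => simp only [ext0, dif_pos hlt]
    rfl
  have hns : ¬ Function.Surjective T := by
    intro hs
    obtain ⟨g, hg⟩ := hs (Pi.single 0 1)
    have h1 := sum_eigen_mul hw' (fun y => ext0 g (G.dist x₀ y))
    have h2 : ∑ z, w z * ext0 (T g) (G.dist x₀ z) = 0 := by
      simp_rw [← hTdist g x₀, mul_sub, Finset.sum_sub_distrib]
      rw [h1, Finset.mul_sum, sub_eq_zero]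
      exact Finset.sum_congr rfl fun z _ => by ring
    rw [hg, Finset.sum_eq_single x₀] at h2
    · simp [ext0] at h2
      exact hx₀ h2
    · intro z _ hz
      have hpos := h.1.pos_dist_of_ne hz.symm
      have : ext0 (Pi.single 0 1) (G.dist x₀ z) = 0 := by
        simp only [ext0]
        split_ifs with hlt
        · rw [Pi.single_eq_of_ne]
          intro h0
          have : G.dist x₀ z = 0 := congrArg Fin.val h0
          omega
        · rfl
      rw [this, mul_zero]
    · simp
  have hni : ¬ Function.Injective T := fun hi => hns (LinearMap.injective_iff_surjective.1 hi)
  rw [← LinearMap.ker_eq_bot, ← ne_eq, Submodule.ne_bot_iff] at hni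
  obtain ⟨g, hgk, hg0⟩ := hni
  rw [LinearMap.mem_ker] at hgk
  have hrec : ∀ i, i < D + 1 → c i * ext0 g (i - 1) + ((b 0 : ℝ) - b i - c i) * ext0 g i
        + b i * ext0 g (i + 1) = θ * ext0 g i := by
    intro i hi
    have := congrFun hgk ⟨i, hi⟩
    exact sub_eq_zero.1 this
  refine ⟨ext0 g, ?_, fun x y => ?_⟩
  · intro h1
    have h0 : ext0 g 0 = 0 := by
      have := hrec 0 (by omega)
      rw [h.2.2.2.1] at this
      simp only [zero_add, h1] at this
      simpa [hθ] using this
    -- Two consecutive zeros propagate upwards because `b i > 0` for `i < D`.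
    have hall : ∀ i, i < D → ext0 g i = 0 ∧ ext0 g (i + 1) = 0 := by
      intro i
      induction i with
      | zero => intro _; exact ⟨h0, h1⟩
      | succ i ih =>
        intro hi
        obtain ⟨e1, e2⟩ := ih (by omega)
        refine ⟨e2, ?_⟩
        have := hrec (i + 1) (by omega)
        rw [Nat.add_sub_cancel, e1, e2] at this
        have hb : (b (i + 1) : ℝ) ≠ 0 := by exact_mod_cast (h.b_pos hi).ne'
        simpa [hb] using this
    apply hg0
    funext i
    have hi : ext0 g i = g i := dif_pos i.2
    rw [← hi]
    rcases Nat.lt_or_ge i.1 D with hlt | hge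
    · exact (hall _ hlt).1
    · have := (hall (D - 1) (by omega)).2
      rwa [show D - 1 + 1 = (i : ℕ) by omega] at this
  · have := hTdist g x y
    rw [hgk] at this
    have hz : ext0 0 (G.dist x y) = 0 := by simp [ext0]
    rw [hz] at this
    linarith

/-! ### The lines of a geometric distance-regular graph -/

/-- The geometry carried by a geometric distance-regular graph `G` of valency `k`: a family `L` of
cliques ("lines") with `t` vertices each, every edge lying on exactly one of them, every vertex on
`r` of them. By `exists_far` lines are maximal cliques, and by `card_adj` every vertex off a line
`C` which has a neighbour on `C` has exactly `ψ` neighbours there. -/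
structure LineSystem {V : Type*} [Fintype V] (G : SimpleGraph V) [DecidableRel G.Adj]
    (k : ℕ) (L : Finset (Finset V)) (t r ψ : ℕ) : Prop where
  two_le : 2 ≤ t
  clique : ∀ C ∈ L, G.IsClique (C : Set V)
  card_eq : ∀ C ∈ L, C.card = t
  exists_line : ∀ x y, G.Adj x y → ∃ C ∈ L, x ∈ C ∧ y ∈ C
  unique_line : ∀ x y, G.Adj x y → ∀ C ∈ L, ∀ C' ∈ L, x ∈ C → y ∈ C → x ∈ C' → y ∈ C' → C = C'
  card_through : ∀ x, ∃ S : Finset (Finset V), (∀ C, C ∈ S ↔ C ∈ L ∧ x ∈ C) ∧ S.card = r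
  valency : r * (t - 1) = k
  exists_far : ∀ C ∈ L, ∀ z, ∃ y ∈ C, ¬ G.Adj z y
  card_adj : ∀ C ∈ L, ∀ z ∉ C, (∃ y ∈ C, G.Adj z y) → (C.filter (G.Adj z)).card = ψ

/-- The neighbours of `x` are partitioned by the lines through `x`. -/
lemma sum_neighborFinset_eq_sum_lines [DecidableEq V] {L : Finset (Finset V)}
    (hcl : ∀ C ∈ L, G.IsClique (C : Set V))
    (hex : ∀ x y, G.Adj x y → ∃ C ∈ L, x ∈ C ∧ y ∈ C)
    (hun : ∀ x y, G.Adj x y → ∀ C ∈ L, ∀ C' ∈ L, x ∈ C → y ∈ C → x ∈ C' → y ∈ C' → C = C')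
    {M : Type*} [AddCommMonoid M] (f : V → M) (x : V) :
    ∑ y ∈ G.neighborFinset x, f y = ∑ C ∈ L.filter (x ∈ ·), ∑ y ∈ C.erase x, f y := by
  rw [← Finset.sum_biUnion]
  · apply Finset.sum_congr _ fun _ _ => rfl
    ext y
    simp only [mem_neighborFinset, Finset.mem_biUnion, Finset.mem_filter, Finset.mem_erase]
    constructor
    · intro hxy
      obtain ⟨C, hC, hx, hy⟩ := hex x y hxy
      exact ⟨C, ⟨hC, hx⟩, hxy.ne', hy⟩
    · rintro ⟨C, ⟨hC, hx⟩, hne, hy⟩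
      exact hcl C hC hx hy hne.symm
  · intro C hC C' hC' hne
    rw [Finset.mem_coe, Finset.mem_filter] at hC hC'
    rw [Function.onFun, Finset.disjoint_left]
    intro y hy hy'
    rw [Finset.mem_erase] at hy hy'
    exact hne (hun x y (hcl C hC.1 hC.2 hy.2 hy.1.symm) C hC.1 C' hC'.1 hC.2 hy.2 hC'.2 hy'.2)

/-- If every vertex is on `-θ` lines, then the point-line incidence matrix `N` satisfies
`N * Nᵀ = A - θ I`; hence a `θ`-eigenfunction sums to zero over every line. -/
lemma sum_line_eq_zero [DecidableEq V] {L : Finset (Finset V)} {θ : ℝ}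
    (hcl : ∀ C ∈ L, G.IsClique (C : Set V))
    (hex : ∀ x y, G.Adj x y → ∃ C ∈ L, x ∈ C ∧ y ∈ C)
    (hun : ∀ x y, G.Adj x y → ∀ C ∈ L, ∀ C' ∈ L, x ∈ C → y ∈ C → x ∈ C' → y ∈ C' → C = C')
    (hr : ∀ x, ((L.filter (x ∈ ·)).card : ℝ) = -θ) {f : V → ℝ}
    (hf : ∀ y, ∑ z ∈ G.neighborFinset y, f z = θ * f y) {C : Finset V} (hC : C ∈ L) :
    ∑ y ∈ C, f y = 0 := by
  have h1 : ∀ x, ∑ C ∈ L.filter (x ∈ ·), ∑ y ∈ C, f y = 0 := by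
    intro x
    have h2 : ∑ C ∈ L.filter (x ∈ ·), ∑ y ∈ C, f y =
        ∑ C ∈ L.filter (x ∈ ·), (f x + ∑ y ∈ C.erase x, f y) := by
      refine Finset.sum_congr rfl fun C hC => ?_
      rw [Finset.add_sum_erase _ _ (Finset.mem_filter.1 hC).2]
    rw [h2, Finset.sum_add_distrib, ← sum_neighborFinset_eq_sum_lines hcl hex hun, hf,
      Finset.sum_const, nsmul_eq_mul, hr]
    ring
  have h3 : ∑ C ∈ L, (∑ y ∈ C, f y) ^ 2 = 0 := by
    have h4 : ∑ C ∈ L, (∑ y ∈ C, f y) ^ 2 =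
        ∑ x, f x * ∑ C ∈ L.filter (x ∈ ·), ∑ y ∈ C, f y := by
      simp_rw [sq, Finset.mul_sum (L.filter _)]
      simp_rw [Finset.sum_mul (s := (_ : Finset V))]
      apply Finset.sum_comm'
      intro C x
      simp
    rw [h4]
    exact Finset.sum_eq_zero fun x _ => by rw [h1, mul_zero]
  have h5 := (Finset.sum_eq_zero_iff_of_nonneg fun C _ => sq_nonneg _).1 h3 C hC
  exact pow_eq_zero_iff two_ne_zero |>.1 h5

lemma IsGeometric.exists_lineSystem (h : IsDRG G D b c) (hD : 2 ≤ D)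
    (hgeo : IsGeometric G (b 0)) : ∃ L t r ψ, LineSystem G (b 0) L t r ψ := by
  classical
  obtain ⟨-, θ, 𝒞, heig, -, hdel, huniq⟩ := hgeo
  let L : Finset (Finset V) := Finset.univ.filter (· ∈ 𝒞)
  have hL : ∀ C, C ∈ L ↔ C ∈ 𝒞 := fun C => by simp [L]
  have hcl : ∀ C ∈ L, G.IsClique (C : Set V) := fun C hC => (hdel C ((hL C).1 hC)).1
  have hex : ∀ x y, G.Adj x y → ∃ C ∈ L, x ∈ C ∧ y ∈ C := by
    intro x y hxy
    obtain ⟨C, hC, -⟩ := huniq x y hxy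
    exact ⟨C, (hL C).2 hC.1, hC.2⟩
  have hun : ∀ x y, G.Adj x y → ∀ C ∈ L, ∀ C' ∈ L, x ∈ C → y ∈ C → x ∈ C' → y ∈ C' → C = C' := by
    intro x y hxy C hC C' hC' h1 h2 h3 h4
    exact (huniq x y hxy).unique ⟨(hL C).1 hC, h1, h2⟩ ⟨(hL C').1 hC', h3, h4⟩
  -- Some line contains an edge, which fixes the common size `t ≥ 2` of the lines and `θ ≠ 0`.
  obtain ⟨x₀, -⟩ := h.2.1
  have hb0 : 0 < b 0 := h.b_pos (by omega)
  obtain ⟨y₀, hy₀⟩ : ∃ y₀, G.Adj x₀ y₀ := by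
    rw [← h.card_neighborFinset x₀, Finset.card_pos] at hb0
    obtain ⟨y, hy⟩ := hb0
    exact ⟨y, (G.mem_neighborFinset _ _).1 hy⟩
  obtain ⟨C₀, hC₀, hx₀C, hy₀C⟩ := hex x₀ y₀ hy₀
  have ht2 : 2 ≤ C₀.card := Finset.one_lt_card.2 ⟨x₀, hx₀C, y₀, hy₀C, hy₀.ne⟩
  have hcardR : ∀ C ∈ L, (C.card : ℝ) = 1 + (b 0 : ℝ) / (-θ) :=
    fun C hC => (hdel C ((hL C).1 hC)).2
  have hcard : ∀ C ∈ L, C.card = C₀.card := by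
    intro C hC
    have := (hcardR C hC).trans (hcardR C₀ hC₀).symm
    exact_mod_cast this
  generalize C₀.card = t at ht2 hcard
  have htR : (t : ℝ) = 1 + (b 0 : ℝ) / (-θ) := by rw [← hcard C₀ hC₀]; exact hcardR C₀ hC₀
  have ht2R : (2 : ℝ) ≤ t := by exact_mod_cast ht2
  have hθ : θ ≠ 0 := by
    rintro rfl
    simp at htR
    linarith
  have hval : ∀ x, (L.filter (x ∈ ·)).card * (t - 1) = b 0 := by
    intro x
    rw [← h.card_neighborFinset x, Finset.card_eq_sum_ones (G.neighborFinset x),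
      sum_neighborFinset_eq_sum_lines hcl hex hun]
    simp_rw [← Finset.card_eq_sum_ones]
    rw [Finset.sum_const_nat]
    intro C hC
    rw [Finset.mem_filter] at hC
    rw [Finset.card_erase_of_mem hC.2, hcard C hC.1]
  have hr : ∀ x, ((L.filter (x ∈ ·)).card : ℝ) = -θ := by
    intro x
    have h1 : ((L.filter (x ∈ ·)).card : ℝ) * (t - 1) = b 0 := by
      rw [← hval x]; push_cast [Nat.cast_sub (show 1 ≤ t by omega)]; ring
    have h2 : (-θ) * ((t : ℝ) - 1) = b 0 := by rw [htR]; field_simp; ring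
    exact mul_right_cancel₀ (by linarith) (h1.trans h2.symm)
  obtain ⟨φ, hφ1, hφ⟩ := h.exists_cosine hD hθ heig
  have hsum : ∀ C ∈ L, ∀ z, ∑ y ∈ C, φ (G.dist z y) = 0 := fun C hC z =>
    sum_line_eq_zero hcl hex hun hr (hφ z) hC
  have hfar : ∀ C ∈ L, ∀ z, ∃ y ∈ C, ¬ G.Adj z y := by
    intro C hC z
    by_contra! hall
    have := hsum C hC z
    rw [Finset.sum_congr rfl fun y hy => by rw [dist_eq_one_iff_adj.2 (hall y hy)],
      Finset.sum_const, nsmul_eq_mul, hcard C hC] at this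
    rcases mul_eq_zero.1 this with h0 | h0
    · linarith
    · exact hφ1 h0
  -- On such a line only the distances `1` and `2` from `z` occur.
  have hcount : ∀ C ∈ L, ∀ z ∉ C, (∃ y ∈ C, G.Adj z y) →
      ((C.filter (G.Adj z)).card : ℝ) * (φ 1 - φ 2) + t * φ 2 = 0 := by
    rintro C hC z hz ⟨y, hy, hzy⟩
    have hpt : ∀ y' ∈ C, φ (G.dist z y') = (if G.Adj z y' then φ 1 - φ 2 else 0) + φ 2 := by
      intro y' hy'
      split_ifs with hadj
      · rw [dist_eq_one_iff_adj.2 hadj]; ring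
      · have hne : y ≠ y' := by rintro rfl; exact hadj hzy
        rw [dist_eq_two_of_common h.1 (by rintro rfl; exact hz hy') hadj hzy
          (hcl C hC hy hy' hne)]
        ring
    have := hsum C hC z
    rwa [Finset.sum_congr rfl hpt, Finset.sum_add_distrib, ← Finset.sum_filter, Finset.sum_const,
      Finset.sum_const, nsmul_eq_mul, nsmul_eq_mul, hcard C hC] at this
  have hφ12 : φ 1 - φ 2 ≠ 0 → ∀ C ∈ L, ∀ z ∉ C, (∃ y ∈ C, G.Adj z y) →
      ((C.filter (G.Adj z)).card : ℝ) = - (t * φ 2) / (φ 1 - φ 2) := by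
    intro hne C hC z hz hy
    rw [eq_div_iff hne]
    linarith [hcount C hC z hz hy]
  have hψ : ∃ ψ : ℕ, ∀ C ∈ L, ∀ z ∉ C, (∃ y ∈ C, G.Adj z y) →
      (C.filter (G.Adj z)).card = ψ := by
    by_cases hP : ∃ C ∈ L, ∃ z ∉ C, ∃ y ∈ C, G.Adj z y
    · obtain ⟨C, hC, z, hz, hy⟩ := hP
      refine ⟨(C.filter (G.Adj z)).card, fun C' hC' z' hz' hy' => ?_⟩
      have h12 : φ 1 - φ 2 ≠ 0 := by
        intro h0
        have := hcount C hC z hz hy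
        rw [h0, mul_zero, zero_add] at this
        rcases mul_eq_zero.1 this with h1 | h1
        · linarith
        · exact hφ1 (by linarith)
      have := (hφ12 h12 C' hC' z' hz' hy').trans (hφ12 h12 C hC z hz hy).symm
      exact_mod_cast this
    · exact ⟨0, fun C hC z hz hy => absurd ⟨C, hC, z, hz, hy⟩ hP⟩
  obtain ⟨ψ, hψ⟩ := hψ
  refine ⟨L, t, (L.filter (x₀ ∈ ·)).card, ψ, ht2, hcl, hcard, hex, hun, fun x => ?_, hval x₀,
    hfar, hψ⟩
  refine ⟨L.filter (x ∈ ·), fun C => Finset.mem_filter, ?_⟩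
  have := (hr x).trans (hr x₀).symm
  exact_mod_cast this

/-! ### Quadrangles and claws -/

/-- Suppose the common neighbours of the nonadjacent vertices `x`, `v` form a clique, and let `M` be
a line through `x` that meets the neighbourhood of `v` (in `w₂`). A common neighbour `w₁` off `M`
would be adjacent to `x` and to all neighbours of `v` on `M`, so it would have more neighbours on
`M` than `v` has, although both have `ψ` of them. -/
lemma LineSystem.false_of_clique {k : ℕ} {L : Finset (Finset V)} {t r ψ : ℕ}
    (hL : LineSystem G k L t r ψ) {x v w₁ w₂ : V} (hxv : x ≠ v) (hna : ¬ G.Adj x v)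
    (hcommon : ∀ p q, p ≠ q → G.Adj x p → G.Adj p v → G.Adj x q → G.Adj q v → G.Adj p q)
    (h1 : G.Adj x w₁) (h1' : G.Adj w₁ v) (h2' : G.Adj w₂ v)
    {M : Finset V} (hM : M ∈ L) (hxM : x ∈ M) (hw₂ : w₂ ∈ M) (hw₁ : w₁ ∉ M) : False := by
  classical
  have hvM : v ∉ M := fun hv => hna (hL.clique M hM hxM hv hxv)
  have e1 := hL.card_adj M hM v hvM ⟨w₂, hw₂, h2'.symm⟩
  have e2 := hL.card_adj M hM w₁ hw₁ ⟨x, hxM, h1.symm⟩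
  have hss : M.filter (G.Adj v) ⊂ M.filter (G.Adj w₁) := by
    rw [Finset.ssubset_iff_of_subset]
    · refine ⟨x, Finset.mem_filter.2 ⟨hxM, h1.symm⟩, fun hx => ?_⟩
      exact hna (Finset.mem_filter.1 hx).2.symm
    · intro p hp
      rw [Finset.mem_filter] at hp ⊢
      refine ⟨hp.1, hcommon w₁ p ?_ h1 h1' (hL.clique M hM hxM hp.1 ?_) hp.2.symm⟩
      · rintro rfl; exact hw₁ hp.1
      · rintro rfl; exact hna hp.2.symm
  have := Finset.card_lt_card hss
  omega

/-- If `c₂ ≥ 2`, any two vertices at distance two are opposite vertices of a quadrangle. -/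
lemma LineSystem.exists_quadrangle {k : ℕ} {L : Finset (Finset V)} {t r ψ : ℕ}
    (hL : LineSystem G k L t r ψ) (h : IsDRG G D b c) (hD : 2 ≤ D) (hc : 2 ≤ c 2)
    {x v : V} (hxv : G.dist x v = 2) :
    ∃ p q, p ≠ q ∧ ¬ G.Adj p q ∧ G.Adj x p ∧ G.Adj p v ∧ G.Adj x q ∧ G.Adj q v := by
  by_contra! hcon
  have hne : x ≠ v := by rintro rfl; simp at hxv
  have hna : ¬ G.Adj x v := fun ha => by rw [dist_eq_one_iff_adj.2 ha] at hxv; omega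
  have hcommon : ∀ p q, p ≠ q → G.Adj x p → G.Adj p v → G.Adj x q → G.Adj q v → G.Adj p q := by
    intro p q hpq h1 h2 h3 h4
    by_contra h5
    exact hcon p q hpq h5 h1 h2 h3 h4
  have hcommon' : ∀ p q, p ≠ q → G.Adj v p → G.Adj p x → G.Adj v q → G.Adj q x → G.Adj p q :=
    fun p q hpq h1 h2 h3 h4 => hcommon p q hpq h2.symm h1.symm h4.symm h3.symm
  have hcard := (h.2.2.2.2.2.2 2 hD x v hxv).1
  rw [← hcard] at hc
  obtain ⟨w₁, ⟨hw₁v, hxw₁⟩, w₂, ⟨hw₂v, hxw₂⟩, hw⟩ := (Set.one_lt_ncard).1 hc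
  replace hxw₁ : G.Adj x w₁ := dist_eq_one_iff_adj.1 hxw₁
  replace hxw₂ : G.Adj x w₂ := dist_eq_one_iff_adj.1 hxw₂
  obtain ⟨M, hM, hxM, hw₂M⟩ := hL.exists_line x w₂ hxw₂
  obtain ⟨N, hN, hvN, hw₂N⟩ := hL.exists_line v w₂ hw₂v
  by_cases h1 : w₁ ∈ M
  · by_cases h2 : w₁ ∈ N
    · have := hL.unique_line w₁ w₂ (hL.clique M hM h1 hw₂M hw) M hM N hN h1 hw₂M h2 hw₂N
      subst this
      exact hna (hL.clique M hM hxM hvN hne)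
    · exact hL.false_of_clique hne.symm (fun ha => hna ha.symm) hcommon' hw₁v hxw₁.symm
        hxw₂.symm hN hvN hw₂N h2
  · exact hL.false_of_clique hne hna hcommon hxw₁ hw₁v.symm hw₂v.symm hM hxM hw₂M h1

/-- With `D ≥ 4` and `c₂ ≥ 2`, the midpoint `v` of a geodesic of length four from `x` to `y` is the
centre of a `4`-claw: two of the leaves lie between `x` and `v`, the other two between `v` and
`y`. -/
lemma LineSystem.hasClaw_four {k : ℕ} {L : Finset (Finset V)} {t r ψ : ℕ}
    (hL : LineSystem G k L t r ψ) (h : IsDRG G D b c) (hD : 4 ≤ D) (hc : 2 ≤ c 2) :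
    HasClaw G 4 := by
  classical
  have hconn := h.1
  obtain ⟨x, y', hxy'⟩ := h.2.1
  obtain ⟨y, hxy, -⟩ := exists_dist_eq_of_le hconn x y' (i := 4) (by omega)
  obtain ⟨v, hxv, hvy⟩ := exists_dist_eq_of_le hconn x y (i := 2) (by omega)
  rw [hxy] at hvy
  obtain ⟨p, p', hpp, hnp, hxp, hpv, hxp', hpv'⟩ := hL.exists_quadrangle h (by omega) hc hxv
  obtain ⟨q, q', hqq, hnq, hvq, hqy, hvq', hqy'⟩ := hL.exists_quadrangle h (by omega) hc hvy
  have hsep : ∀ a e, G.Adj x a → G.Adj e y → a ≠ e ∧ ¬ G.Adj a e := by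
    intro a e hxa hey
    have h1 := hconn.dist_triangle (u := x) (v := a) (w := y)
    have h2 := hconn.dist_triangle (u := a) (v := e) (w := y)
    rw [dist_eq_one_iff_adj.2 hxa] at h1
    rw [dist_eq_one_iff_adj.2 hey] at h2
    refine ⟨?_, fun ha => ?_⟩
    · rintro rfl
      rw [dist_self] at h2
      omega
    · rw [dist_eq_one_iff_adj.2 ha] at h2
      omega
  obtain ⟨n1, m1⟩ := hsep p q hxp hqy
  obtain ⟨n2, m2⟩ := hsep p q' hxp hqy'
  obtain ⟨n3, m3⟩ := hsep p' q hxp' hqy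
  obtain ⟨n4, m4⟩ := hsep p' q' hxp' hqy'
  refine ⟨v, {p, p', q, q'}, ?_, ?_, ?_⟩
  · rw [Finset.card_insert_of_notMem (by simp [*]), Finset.card_insert_of_notMem (by simp [*]),
      Finset.card_pair hqq]
  · simp [hpv.symm, hpv'.symm, hvq, hvq']
  · intro a ha e he _
    simp only [Finset.coe_insert, Finset.coe_singleton, Set.mem_insert_iff,
      Set.mem_singleton_iff] at ha he
    rcases ha with rfl | rfl | rfl | rfl <;> rcases he with rfl | rfl | rfl | rfl <;>
      first
      | exact G.loopless.irrefl _
      | assumption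
      | exact fun hh => by simp_all [G.adj_comm]

/-- If `c₂ = 1`, every common neighbour `z` of two adjacent vertices `x`, `y` lies on their line:
otherwise, the line being a maximal clique, it contains a vertex at distance two from `z`, and that
vertex and `z` have the two common neighbours `x` and `y`. -/
lemma LineSystem.mem_line {k : ℕ} {L : Finset (Finset V)} {t r ψ : ℕ}
    (hL : LineSystem G k L t r ψ) (h : IsDRG G D b c) (hD : 2 ≤ D) (hc : c 2 = 1)
    {x y z : V} (hxy : G.Adj x y) (hxz : G.Adj x z) (hyz : G.Adj y z)
    {C : Finset V} (hC : C ∈ L) (hx : x ∈ C) (hy : y ∈ C) : z ∈ C := by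
  by_contra hz
  obtain ⟨u, hu, hzu⟩ := hL.exists_far C hC z
  have hux : x ≠ u := by rintro rfl; exact hzu hxz.symm
  have huy : y ≠ u := by rintro rfl; exact hzu hyz.symm
  have hxu := hL.clique C hC hx hu hux
  have hyu := hL.clique C hC hy hu huy
  have hd : G.dist z u = 2 :=
    dist_eq_two_of_common h.1 (by rintro rfl; exact hz hu) hzu hxz.symm hxu
  have hcard := (h.2.2.2.2.2.2 2 hD z u hd).1
  have : 1 < {w : V | G.Adj u w ∧ G.dist z w = 2 - 1}.ncard :=
    (Set.one_lt_ncard).2 ⟨x, ⟨hxu.symm, dist_eq_one_iff_adj.2 hxz.symm⟩, y,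
      ⟨hyu.symm, dist_eq_one_iff_adj.2 hyz.symm⟩, hxy.ne⟩
  omega

/-- If `c₂ = 1`, then `a₁ + 2 = t`. -/
lemma LineSystem.a_one {k : ℕ} {L : Finset (Finset V)} {t r ψ : ℕ}
    (hL : LineSystem G k L t r ψ) (h : IsDRG G D b c) (hD : 2 ≤ D) (hc : c 2 = 1)
    {x y : V} (hxy : G.Adj x y) : (b 0 : ℤ) - b 1 - c 1 + 2 = t := by
  classical
  obtain ⟨C, hC, hx, hy⟩ := hL.exists_line x y hxy
  have h1 := h.sum_neighbor (fun n => if n = 1 then 1 else 0) x y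
  rw [dist_eq_one_iff_adj.2 hxy, ← Finset.sum_filter, Finset.sum_const] at h1
  have h2 : (G.neighborFinset y).filter (fun z => G.dist x z = 1) = (C.erase x).erase y := by
    ext z
    simp only [Finset.mem_filter, mem_neighborFinset, dist_eq_one_iff_adj, Finset.mem_erase]
    constructor
    · rintro ⟨hyz, hxz⟩
      exact ⟨hyz.ne', hxz.ne', hL.mem_line h hD hc hxy hxz hyz hC hx hy⟩
    · rintro ⟨hzy, hzx, hz⟩
      exact ⟨hL.clique C hC hy hz hzy.symm, hL.clique C hC hx hz hzx.symm⟩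
  rw [h2, Finset.card_erase_of_mem (Finset.mem_erase.2 ⟨hxy.ne', hy⟩),
    Finset.card_erase_of_mem hx, hL.card_eq C hC] at h1
  have ht := hL.two_le
  rw [show t - 1 - 1 = t - 2 by omega] at h1
  simp [Nat.cast_sub ht] at h1
  have h3 : (b 0 : ℝ) - b 1 - c 1 + 2 = t := by linarith
  exact_mod_cast h3

/-- If `c₂ = 1`, the neighbourhood of a vertex is a disjoint union of `r` cliques, so the largest
claw has `r` leaves; here `r` is the number of lines through a vertex. -/
lemma LineSystem.lines_eq_three {k : ℕ} {L : Finset (Finset V)} {t r ψ : ℕ}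
    (hL : LineSystem G k L t r ψ) (h : IsDRG G D b c) (hD : 2 ≤ D) (hc : c 2 = 1)
    (hclaw3 : HasClaw G 3) (hclaw4 : ¬ HasClaw G 4) : r = 3 := by
  classical
  obtain ⟨x, s, hs, hadj, hind⟩ := hclaw3
  obtain ⟨S, hS, hSr⟩ := hL.card_through x
  apply le_antisymm
  · by_contra! hr
    apply hclaw4
    obtain ⟨S', hS'S, hS'⟩ := Finset.exists_subset_card_eq (show 4 ≤ S.card by omega)
    have hpick : ∀ C ∈ S', ∃ y ∈ C, y ≠ x := by
      intro C hC
      have hCL := ((hS C).1 (hS'S hC)).1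
      exact Finset.exists_mem_ne (by rw [hL.card_eq C hCL]; exact hL.two_le) x
    have : Nonempty V := ⟨x⟩
    choose! p hpC hpx using hpick
    have hxp : ∀ C ∈ S', G.Adj x (p C) := by
      intro C hC
      obtain ⟨hCL, hxC⟩ := (hS C).1 (hS'S hC)
      exact hL.clique C hCL hxC (hpC C hC) (hpx C hC).symm
    have huni : ∀ C ∈ S', ∀ C' ∈ S', p C' ∈ C → C = C' := by
      intro C hC C' hC' hm
      obtain ⟨hCL, hxC⟩ := (hS C).1 (hS'S hC)
      obtain ⟨hCL', hxC'⟩ := (hS C').1 (hS'S hC')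
      exact hL.unique_line x (p C') (hxp C' hC') C hCL C' hCL' hxC hm hxC' (hpC C' hC')
    refine ⟨x, S'.image p, ?_, ?_, ?_⟩
    · rw [Finset.card_image_of_injOn, hS']
      intro C hC C' hC' he
      exact huni C hC C' hC' (he ▸ hpC C hC)
    · intro y hy
      obtain ⟨C, hC, rfl⟩ := Finset.mem_image.1 hy
      exact hxp C hC
    · intro y hy z hz hne hyz
      obtain ⟨C, hC, rfl⟩ := Finset.mem_image.1 hy
      obtain ⟨C', hC', rfl⟩ := Finset.mem_image.1 hz
      obtain ⟨hCL, hxC⟩ := (hS C).1 (hS'S hC)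
      have := huni C hC C' hC'
        (hL.mem_line h hD hc (hxp C hC) (hxp C' hC') hyz hCL hxC (hpC C hC))
      exact hne (by rw [this])
  · rw [← hSr, ← hs]
    have hline : ∀ y ∈ s, ∃ C ∈ L, x ∈ C ∧ y ∈ C := fun y hy => hL.exists_line x y (hadj y hy)
    choose! ℓ hℓL hxℓ hyℓ using hline
    refine Finset.card_le_card_of_injOn ℓ (fun y hy => (hS _).2 ⟨hℓL y hy, hxℓ y hy⟩) ?_
    intro y hy z hz he
    by_contra hne
    exact hind hy hz hne (hL.clique _ (hℓL y hy) (hyℓ y hy) (he ▸ hyℓ z hz) hne)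

end DistanceRegular

/-- a geometric DRG with `D ≥ 3`, with a 3-claw but no 4-claws, satisfies
either `k = 3(a₁+1)` and `c₂ = 1`, or `D = 3` and `c₂ ≥ 2`. -/
theorem statement12 {V : Type*} [Fintype V] (G : SimpleGraph V) [DecidableRel G.Adj]
    (D : ℕ) (b c : ℕ → ℕ)
    (hdrg : IsDRG G D b c) (hD : 3 ≤ D) (hgeo : IsGeometric G (b 0))
    (hclaw3 : HasClaw G 3) (hclaw4 : ¬ HasClaw G 4) :
    ((b 0 : ℤ) = 3 * (((b 0 : ℤ) - b 1 - c 1) + 1) ∧ c 2 = 1) ∨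
    (D = 3 ∧ 2 ≤ c 2) := by
  obtain ⟨L, t, r, ψ, hL⟩ := IsGeometric.exists_lineSystem hdrg (by omega) hgeo
  by_cases hc : 2 ≤ c 2
  · refine Or.inr ⟨?_, hc⟩
    by_contra hne
    exact hclaw4 (hL.hasClaw_four hdrg (by omega) hc)
  · left
    obtain ⟨x, y', hxy'⟩ := hdrg.2.1
    have hc1 : c 2 = 1 := by
      obtain ⟨y, hxy, -⟩ := exists_dist_eq_of_le hdrg.1 x y' (i := 2) (by omega)
      obtain ⟨z, hxz, hzy⟩ := exists_dist_eq_of_le hdrg.1 x y (i := 1) (by omega)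
      have hpos : 0 < c 2 := by
        rw [← (hdrg.2.2.2.2.2.2 2 (by omega) x y hxy).1, Set.ncard_pos]
        refine ⟨z, (dist_eq_one_iff_adj.1 ?_ : G.Adj z y).symm, hxz⟩
        omega
      omega
    obtain ⟨z, hxz, -⟩ := exists_dist_eq_of_le hdrg.1 x y' (i := 1) (by omega)
    have ha := hL.a_one hdrg (by omega) hc1 (dist_eq_one_iff_adj.1 hxz)
    have hr := hL.lines_eq_three hdrg (by omega) hc1 hclaw3 hclaw4
    have hv := hL.valency
    have ht := hL.two_le
    subst hr
    refine ⟨?_, hc1⟩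
    omega
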